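/- Let U ⊆ {(x,y) ∈ ℝ² : x ≠ y} be a nonempty open set and let g be any smooth Riemannian metric on U (a smooth assignment p ↦ g_p of positive-definite symmetric bilinear forms on ℝ²). Then the three vector fields Z₁ = ∂/∂x + ∂/∂y, Z₂ = x∂/∂x + y∂/∂y, Z₃ = x²∂/∂x + y²∂/∂y (spanning the Lie algebra I₄ ≅ sl(2,ℝ)) are not all conformal with respect to g: it is impossible that for each i ∈ {1,2,3} there is a smooth function fᵢ : U → ℝ with L_{Zᵢ} g = fᵢ·g on U. In other words, I₄ is not a Lie algebra of Euclidean (conformal-Riemannian) vector fields. -/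

import Mathlib

/-!
At a point `p = (a, b)` of `U`, the combination `W = Z₃ - (a + b) Z₂ + a b Z₁`, that is
`(x - a)(x - b) ∂_x + (y - a)(y - b) ∂_y`, vanishes, so the derivative of the metric drops
out of `L_W g` at `p`. The linear part of `W` there is `A = diag(a - b, b - a)`, and conformality
reads `g_p(A v, w) + g_p(v, A w) = h g_p(v, w)` for a real number `h`. Taking `v = w` equal to each
of the two eigenvectors of `A`, which are not `g_p`-null, gives `h = 2 (a - b)` and
`h = 2 (b - a)`: contradiction, since `a ≠ b`.
-/

/-- `Z` is conformal on `U` with respect to the metric `g`, with a smooth potential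
function: `L_Z g = f·g` on `U` for some smooth `f`. -/
def ConformalOn (U : Set (ℝ × ℝ)) (g : ℝ × ℝ → (ℝ × ℝ) →L[ℝ] (ℝ × ℝ) →L[ℝ] ℝ)
    (Z : ℝ × ℝ → ℝ × ℝ) : Prop :=
  ∃ f : ℝ × ℝ → ℝ, ContDiffOn ℝ (⊤ : ℕ∞) f U ∧
    ∀ p ∈ U, ∀ v w : ℝ × ℝ,
      fderiv ℝ g p (Z p) v w + g p (fderiv ℝ Z p v) w + g p v (fderiv ℝ Z p w)
        = f p * g p v w

/-- The Lie algebra `I₄ ≅ sl(2,ℝ)`, spanned by `∂_x + ∂_y`, `x∂_x + y∂_y`,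
`x²∂_x + y²∂_y` on a nonempty open subset of `{x ≠ y}`, is not a Lie algebra of conformal
vector fields of any smooth Riemannian (positive-definite) metric: its three generators
cannot all be conformal with respect to one such metric. -/
theorem I4_not_euclidean
    (U : Set (ℝ × ℝ)) (hUsub : U ⊆ {p : ℝ × ℝ | p.1 ≠ p.2})
    (hU : IsOpen U) (hne : U.Nonempty)
    (g : ℝ × ℝ → (ℝ × ℝ) →L[ℝ] (ℝ × ℝ) →L[ℝ] ℝ)
    (hg : ContDiffOn ℝ (⊤ : ℕ∞) g U)
    (hsym : ∀ p ∈ U, ∀ v w : ℝ × ℝ, g p v w = g p w v)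
    (hpos : ∀ p ∈ U, ∀ v : ℝ × ℝ, v ≠ 0 → 0 < g p v v) :
    ¬ (ConformalOn U g (fun _ => (1, 1)) ∧
       ConformalOn U g (fun p => (p.1, p.2)) ∧
       ConformalOn U g (fun p => (p.1 ^ 2, p.2 ^ 2))) := by
  rintro ⟨⟨f₁, -, h₁⟩, ⟨f₂, -, h₂⟩, ⟨f₃, -, h₃⟩⟩
  obtain ⟨⟨a, b⟩, hp⟩ := hne
  have hab : a ≠ b := hUsub hp
  have d₂ (v : ℝ × ℝ) : fderiv ℝ (fun p : ℝ × ℝ => (p.1, p.2)) (a, b) v = v := by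
    have h : HasFDerivAt (fun p : ℝ × ℝ => (p.1, p.2)) (ContinuousLinearMap.id ℝ (ℝ × ℝ)) (a, b) :=
      hasFDerivAt_id _
    rw [h.fderiv]
    rfl
  have d₃ (v : ℝ × ℝ) :
      fderiv ℝ (fun p : ℝ × ℝ => (p.1 ^ 2, p.2 ^ 2)) (a, b) v
        = (2 * a * v.1, 2 * b * v.2) := by
    have h := ((hasFDerivAt_fst (𝕜 := ℝ) (p := ((a, b) : ℝ × ℝ))).pow 2).prodMk
      ((hasFDerivAt_snd (𝕜 := ℝ) (p := ((a, b) : ℝ × ℝ))).pow 2)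
    rw [h.fderiv]
    simp
  -- The vanishing of `W` at `(a, b)`, paired with the derivative of the metric.
  have hW (v : ℝ × ℝ) :
      fderiv ℝ g (a, b) (a ^ 2, b ^ 2) v v - (a + b) * fderiv ℝ g (a, b) (a, b) v v
        + a * b * fderiv ℝ g (a, b) (1, 1) v v = 0 := by
    have h : ((a ^ 2, b ^ 2) : ℝ × ℝ) = (a + b) • (a, b) - (a * b) • (1, 1) := by
      ext <;> simp <;> ring
    rw [h, map_sub, map_smul, map_smul]
    simp
  have c₁ (v : ℝ × ℝ) : fderiv ℝ g (a, b) (1, 1) v v = f₁ (a, b) * g (a, b) v v := by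
    simpa using h₁ _ hp v v
  have c₂ (v : ℝ × ℝ) := h₂ _ hp v v
  have c₃ (v : ℝ × ℝ) := h₃ _ hp v v
  simp only [d₂] at c₂
  simp only [d₃] at c₃
  set h := f₃ (a, b) - (a + b) * f₂ (a, b) + a * b * f₁ (a, b) with hh
  have pos₁ := hpos _ hp (1, 0) (by simp)
  have pos₂ := hpos _ hp (0, 1) (by simp)
  have e₁ : ((2 * a * 1, 2 * b * 0) : ℝ × ℝ) = (2 * a) • (1, 0) := by simp
  have e₂ : ((2 * a * 0, 2 * b * 1) : ℝ × ℝ) = (2 * b) • (0, 1) := by simp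
  have k₁ := c₃ (1, 0)
  have k₂ := c₃ (0, 1)
  simp only [e₁, map_smul, smul_eq_mul, smul_apply] at k₁
  simp only [e₂, map_smul, smul_eq_mul, smul_apply] at k₂
  have r₁ : h = 2 * (a - b) := by
    refine mul_right_cancel₀ pos₁.ne' ?_
    linear_combination hW (1, 0) - k₁ + (a + b) * c₂ (1, 0) - a * b * c₁ (1, 0)
  have r₂ : h = 2 * (b - a) := by
    refine mul_right_cancel₀ pos₂.ne' ?_
    linear_combination hW (0, 1) - k₂ + (a + b) * c₂ (0, 1) - a * b * c₁ (0, 1)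
  exact hab (by linarith)
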